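/- arXiv:2301.00700 — 2 statements merged into one kernel-verified Lean document; each statement's English description precedes it below -/
import Mathlib

section
/- Let M₁ be an NFA over α with state type σ₁ and M₂ an NFA over α with state type σ₂ such that M₂.start = ∅ and M₂.accept = ∅. Define the disjoint-union NFA N over α with state type σ₁ ⊕ σ₂ by N.step (Sum.inl q) a = Sum.inl '' (M₁.step q a), N.step (Sum.inr q) a = Sum.inr '' (M₂.step q a), N.start = Sum.inl '' M₁.start, and N.accept = Sum.inl '' M₁.accept. Then N.accepts = M₁.accepts, while traceLang N = traceLang M₁ ∪ traceLang M₂. -/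
/-- The trace language of an NFA: the set of words read along some cycle. -/
def traceLang {α σ : Type*} (M : NFA α σ) : Set (List α) :=
  {ω : List α | ∃ q : σ, q ∈ M.evalFrom {q} ω}

/-- Evaluation commutes with an embedding of state spaces compatible with the steps. -/
theorem evalFrom_image_of_step {α σ τ : Type*} (M : NFA α σ) (N : NFA α τ) (f : σ → τ)
    (h : ∀ q a, N.step (f q) a = f '' M.step q a) (x : List α) (S : Set σ) :
    N.evalFrom (f '' S) x = f '' M.evalFrom S x := by
  induction x generalizing S with
  | nil => simp
  | cons a x ih =>
    have hs : N.stepSet (f '' S) a = f '' M.stepSet S a := by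
      simp only [NFA.stepSet, Set.biUnion_image, h, Set.image_iUnion]
    rw [NFA.evalFrom_cons, NFA.evalFrom_cons, hs, ih]

/-- Disjoint union of an NFA `M₁` with an NFA `M₂` having no initial and no
accepting states: the accepted language is that of `M₁`, while the trace
language is the union of the two trace languages. -/
theorem disjUnion_accepts_and_traceLang {α σ₁ σ₂ : Type*}
    (M₁ : NFA α σ₁) (M₂ : NFA α σ₂)
    (h2start : M₂.start = ∅) (h2accept : M₂.accept = ∅)
    (N : NFA α (σ₁ ⊕ σ₂))
    (hstep₁ : ∀ (q : σ₁) (a : α), N.step (Sum.inl q) a = Sum.inl '' M₁.step q a)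
    (hstep₂ : ∀ (q : σ₂) (a : α), N.step (Sum.inr q) a = Sum.inr '' M₂.step q a)
    (hstart : N.start = Sum.inl '' M₁.start)
    (haccept : N.accept = Sum.inl '' M₁.accept) :
    N.accepts = M₁.accepts ∧ traceLang N = traceLang M₁ ∪ traceLang M₂ := by
  have e₁ := evalFrom_image_of_step M₁ N Sum.inl hstep₁
  have e₂ := evalFrom_image_of_step M₂ N Sum.inr hstep₂
  constructor
  · ext x
    rw [NFA.mem_accepts, NFA.mem_accepts, hstart, haccept, e₁]
    simp
  · ext x
    have t₁ : ∀ q : σ₁, Sum.inl q ∈ N.evalFrom {Sum.inl q} x ↔ q ∈ M₁.evalFrom {q} x := by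
      intro q
      rw [← Set.image_singleton, e₁]
      simp
    have t₂ : ∀ q : σ₂, Sum.inr q ∈ N.evalFrom {Sum.inr q} x ↔ q ∈ M₂.evalFrom {q} x := by
      intro q
      rw [← Set.image_singleton, e₂]
      simp
    simp only [traceLang, Set.mem_union, Set.mem_setOf_eq, Sum.exists, t₁, t₂]
end

section
/- Let M be an NFA over α with state type σ and M' an NFA over α with state type σ', and let p : σ' → σ be a surjective map such that: (i) for all q' : σ', q' ∈ M'.start ↔ p q' ∈ M.start; (ii) for all q' : σ', q' ∈ M'.accept ↔ p q' ∈ M.accept; (iii) for all q' : σ' and a : α, p '' (M'.step q' a) = M.step (p q') a. Then traceLang M' ⊆ traceLang M: the trace language of a weak covering automaton is contained in the trace language of the base automaton. -/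
/-- The trace language of a weak covering automaton is contained in the trace
language of the base automaton. -/
theorem weakCovering_traceLang_subset {α σ σ' : Type*}
    (M : NFA α σ) (M' : NFA α σ') (p : σ' → σ) (hp : Function.Surjective p)
    (hstart : ∀ q' : σ', q' ∈ M'.start ↔ p q' ∈ M.start)
    (haccept : ∀ q' : σ', q' ∈ M'.accept ↔ p q' ∈ M.accept)
    (hstep : ∀ (q' : σ') (a : α), p '' (M'.step q' a) = M.step (p q') a) :
    traceLang M' ⊆ traceLang M := by
  have key : ∀ (ω : List α) (S : Set σ') (T : Set σ), (∀ x ∈ S, p x ∈ T) →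
      ∀ x ∈ M'.evalFrom S ω, p x ∈ M.evalFrom T ω := by
    intro ω
    induction ω with
    | nil =>
      intro S T h x hx
      exact h x hx
    | cons a w ih =>
      intro S T h x hx
      rw [NFA.evalFrom_cons] at hx ⊢
      refine ih _ _ ?_ x hx
      intro y hy
      rw [NFA.mem_stepSet] at hy ⊢
      obtain ⟨t, ht, hyt⟩ := hy
      refine ⟨p t, h t ht, ?_⟩
      rw [← hstep]
      exact ⟨y, hyt, rfl⟩
  rintro ω ⟨q, hq⟩
  refine ⟨p q, key ω {q} {p q} ?_ q hq⟩
  rintro x rfl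
  rfl
end
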